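/- arXiv:0905.3846 — 10 statements merged into one kernel-verified Lean document; each statement's English description precedes it below -/
import Mathlib

section
/- Let Q be a finite unipotent quasigroup, i.e. there is a ∈ Q with x · x = a for all x ∈ Q. Then the track φ_a is special: for every i ∈ Q with i ≠ a, the cycle type of φ_i differs from the cycle type of φ_a. -/
/-- In a finite unipotent quasigroup (`x * x = a` for all `x`), the
track `φ a` is special: for every `i ≠ a` the cycle type of `φ i` differs from
that of `φ a`. -/
theorem unipotent_special_track {Q : Type*} [Fintype Q] [DecidableEq Q] [Mul Q]
    (hL : ∀ a : Q, Function.Bijective (fun x : Q => a * x))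
    (hR : ∀ a : Q, Function.Bijective (fun x : Q => x * a))
    (φ : Q → Equiv.Perm Q)
    (hφ : ∀ i x : Q, x * φ i x = i)
    (a : Q) (ha : ∀ x : Q, x * x = a) :
    ∀ i : Q, i ≠ a → (φ i).cycleType ≠ (φ a).cycleType := by
  intro i hi h
  -- By left cancellation and `x * x = a`, the track of `a` is the identity.
  have h_one : φ a = 1 := by
    ext x
    exact (hL x).1 ((hφ a x).trans (ha x).symm)
  -- Only the identity has empty cycle type.
  rw [h_one, Equiv.Perm.cycleType_one, Equiv.Perm.cycleType_eq_zero] at h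
  have hx := hφ i i
  rw [h, Equiv.Perm.one_apply, ha] at hx
  exact hi hx.symm
end

section
/- Let Q be a finite quasigroup and suppose the track φ_k is special. Then α(k) = k for every automorphism α of Q. -/
/-- If the track `φ k` of a finite quasigroup is special, then
`α k = k` for every automorphism `α`. -/
theorem special_track_fixed {Q : Type*} [Fintype Q] [DecidableEq Q] [Mul Q]
    (hL : ∀ a : Q, Function.Bijective (fun x : Q => a * x))
    (hR : ∀ a : Q, Function.Bijective (fun x : Q => x * a))
    (φ : Q → Equiv.Perm Q)
    (hφ : ∀ i x : Q, x * φ i x = i)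
    (k : Q)
    (hspec : ∀ i : Q, i ≠ k → (φ i).cycleType ≠ (φ k).cycleType)
    (α : Equiv.Perm Q)
    (hα : ∀ x y : Q, α (x * y) = α x * α y) :
    α k = k := by
  by_contra hne
  refine hspec (α k) hne ?_
  -- `α` carries the equation `x * φ k x = k` to `α x * α (φ k x) = α k`, so it conjugates
  -- the track of `k` to the track of `α k`.
  have hconj : φ (α k) = α * φ k * α⁻¹ := by
    rw [eq_mul_inv_iff_mul_eq]
    ext x
    apply (hL (α x)).injective
    simp only [Equiv.Perm.mul_apply, hφ, ← hα]
  rw [hconj, Equiv.Perm.cycleType_conj]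
end

section
/- Let Q be a finite quasigroup and suppose the track φ_k is special. Then φ_k ∘ α = α ∘ φ_k for every automorphism α of Q. -/
/-- If the track `φ k` of a finite quasigroup is special, then
`φ k ∘ α = α ∘ φ k` for every automorphism `α`. -/
theorem special_track_commutes {Q : Type*} [Fintype Q] [DecidableEq Q] [Mul Q]
    (hL : ∀ a : Q, Function.Bijective (fun x : Q => a * x))
    (hR : ∀ a : Q, Function.Bijective (fun x : Q => x * a))
    (φ : Q → Equiv.Perm Q)
    (hφ : ∀ i x : Q, x * φ i x = i)
    (k : Q)
    (hspec : ∀ i : Q, i ≠ k → (φ i).cycleType ≠ (φ k).cycleType)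
    (α : Equiv.Perm Q)
    (hα : ∀ x y : Q, α (x * y) = α x * α y) :
    φ k * α = α * φ k := by
  -- Applying `α` to `x * φ k x = k` shows that `α` conjugates `φ k` to the track of `α k`.
  have hconj : φ (α k) * α = α * φ k := by
    ext x
    apply (hL (α x)).injective
    simp only [Equiv.Perm.mul_apply]
    rw [hφ, ← hα, hφ]
  -- Conjugation preserves cycle type, so specialness forces `α` to fix `k`.
  have hk : α k = k := by
    by_contra h
    apply hspec _ h
    rw [eq_mul_inv_of_mul_eq hconj, Equiv.Perm.cycleType_conj]
  rwa [hk] at hconj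
end

section
/- Let Q be a finite quasigroup and suppose the track φ_k is special. Then φ_k(k) = α(φ_k(k)) for every automorphism α of Q. -/
/-!
An automorphism `α` conjugates the track `φ k` into the track `φ (α k)`, so these two tracks have
the same cycle type. If `φ k` is special, this forces `α k = k`. Applying `α` to `k * φ k k = k`
and cancelling `k` on the left then gives the claim.
-/

/-- If the track `φ k` of a finite quasigroup is special, then
`φ k k = α (φ k k)` for every automorphism `α`. -/
theorem special_track_value_fixed {Q : Type*} [Fintype Q] [DecidableEq Q] [Mul Q]
    (hL : ∀ a : Q, Function.Bijective (fun x : Q => a * x))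
    (hR : ∀ a : Q, Function.Bijective (fun x : Q => x * a))
    (φ : Q → Equiv.Perm Q)
    (hφ : ∀ i x : Q, x * φ i x = i)
    (k : Q)
    (hspec : ∀ i : Q, i ≠ k → (φ i).cycleType ≠ (φ k).cycleType)
    (α : Equiv.Perm Q)
    (hα : ∀ x y : Q, α (x * y) = α x * α y) :
    φ k k = α (φ k k) := by
  have hconj : φ (α k) = α * φ k * α⁻¹ := by
    ext x
    apply (hL x).1
    have h := hα (α⁻¹ x) (φ k (α⁻¹ x))
    rw [hφ, ← Equiv.Perm.mul_apply α α⁻¹ x, mul_inv_cancel, Equiv.Perm.one_apply] at h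
    simpa [hφ] using h
  -- Conjugate permutations share their cycle type, so speciality forces `α` to fix `k`.
  have hk : α k = k := by
    by_contra hne
    exact hspec _ hne (by rw [hconj, Equiv.Perm.cycleType_conj])
  -- Both sides solve `k * y = k`.
  apply (hL k).1
  have h := hα k (φ k k)
  rw [hφ, hk] at h
  simpa [hφ] using h
end

section
/- Let Q be a finite quasigroup and suppose the tracks φ_i and φ_j are both special. Then φ_i(j) = α(φ_i(j)) for every automorphism α of Q. -/
/-! An automorphism `α` conjugates tracks to tracks: `φ (α k) = α * φ k * α⁻¹`
(`track_map_automorphism`). Conjugate permutations have the same cycle type, so `α` fixes the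
index of every special track (`special_track_index_fixed`). With `α i = i` and `α j = j`, the
conjugation identity evaluated at `j` reads `φ i j = α (φ i j)`. -/

theorem track_map_automorphism {Q : Type*} [Mul Q]
    (hL : ∀ a : Q, Function.Bijective (fun x : Q => a * x))
    (φ : Q → Equiv.Perm Q) (hφ : ∀ i x : Q, x * φ i x = i)
    (α : Equiv.Perm Q) (hα : ∀ x y : Q, α (x * y) = α x * α y) (k x : Q) :
    φ (α k) (α x) = α (φ k x) := by
  apply (hL (α x)).injective
  change α x * φ (α k) (α x) = α x * α (φ k x)
  rw [hφ, ← hα, hφ]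

theorem special_track_index_fixed {Q : Type*} [Fintype Q] [DecidableEq Q] [Mul Q]
    (hL : ∀ a : Q, Function.Bijective (fun x : Q => a * x))
    (φ : Q → Equiv.Perm Q) (hφ : ∀ i x : Q, x * φ i x = i)
    (α : Equiv.Perm Q) (hα : ∀ x y : Q, α (x * y) = α x * α y) (k : Q)
    (hk : ∀ m : Q, m ≠ k → (φ m).cycleType ≠ (φ k).cycleType) : α k = k := by
  by_contra h
  apply hk _ h
  have hconj : φ (α k) = α * φ k * α⁻¹ := by
    ext x
    simpa using track_map_automorphism hL φ hφ α hα k (α⁻¹ x)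
  rw [hconj, Equiv.Perm.cycleType_conj]

/-- If the tracks `φ i` and `φ j` of a finite quasigroup are both
special, then `φ i j = α (φ i j)` for every automorphism `α`. -/
theorem two_special_tracks_value_fixed {Q : Type*} [Fintype Q] [DecidableEq Q] [Mul Q]
    (hL : ∀ a : Q, Function.Bijective (fun x : Q => a * x))
    (hR : ∀ a : Q, Function.Bijective (fun x : Q => x * a))
    (φ : Q → Equiv.Perm Q)
    (hφ : ∀ i x : Q, x * φ i x = i)
    (i j : Q)
    (hi : ∀ m : Q, m ≠ i → (φ m).cycleType ≠ (φ i).cycleType)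
    (hj : ∀ m : Q, m ≠ j → (φ m).cycleType ≠ (φ j).cycleType)
    (α : Equiv.Perm Q)
    (hα : ∀ x y : Q, α (x * y) = α x * α y) :
    φ i j = α (φ i j) := by
  have h := track_map_automorphism hL φ hφ α hα i j
  rwa [special_track_index_fixed hL φ hφ α hα i hi,
    special_track_index_fixed hL φ hφ α hα j hj] at h
end

section
/- There is no rigid quasigroup of order 3: every quasigroup on a three-element set admits an automorphism different from the identity. -/
/-!
Transport the operation to `ZMod 3`. An injective self-map of `ZMod 3` is affine with nonzero slope
(`zmod3_affine`), so the operation is affine in each variable separately. The slope in `y` is then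
an affine function of `x` without zeros, hence constant, and the operation has the form
`x * y = a x + b y + c` with `a, b ≠ 0` (`zmod3_quasigroup_affine`).

The bijection `t ↦ u t + v` with `u = ±1` is an automorphism exactly when
`(u - 1) c = (a + b - 1) v`. If `a + b = 1`, the translation `u = v = 1` works; otherwise `u = -1`
and the solution `v` of `(a + b - 1) v = -2 c` work.
-/

theorem zmod3_affine (g : ZMod 3 → ZMod 3) (hg : Function.Injective g) :
    g 1 - g 0 ≠ 0 ∧ ∀ t, g t = g 0 + (g 1 - g 0) * t := by
  have key : ∀ p q r : ZMod 3, p ≠ q → p ≠ r → q ≠ r → r = p + (q - p) * 2 := by decide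
  have h01 : g 0 ≠ g 1 := hg.ne (by decide)
  have h02 : g 0 ≠ g 2 := hg.ne (by decide)
  have h12 : g 1 ≠ g 2 := hg.ne (by decide)
  refine ⟨sub_ne_zero.mpr h01.symm, fun t => ?_⟩
  have ht : ∀ t : ZMod 3, t = 0 ∨ t = 1 ∨ t = 2 := by decide
  rcases ht t with rfl | rfl | rfl
  · ring
  · ring
  · exact key _ _ _ h01 h02 h12

theorem zmod3_quasigroup_affine (f : ZMod 3 → ZMod 3 → ZMod 3)
    (hL : ∀ x, Function.Injective (f x))
    (hR : ∀ y, Function.Injective (fun x => f x y)) :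
    ∃ a b c : ZMod 3, a ≠ 0 ∧ b ≠ 0 ∧ ∀ x y, f x y = a * x + b * y + c := by
  obtain ⟨ha, h0⟩ := zmod3_affine _ (hR 0)
  have h1 := (zmod3_affine _ (hR 1)).2
  have hy := fun x => zmod3_affine _ (hL x)
  have slope : ∀ x, f x 1 - f x 0 =
      (f 0 1 - f 0 0) + ((f 1 1 - f 0 1) - (f 1 0 - f 0 0)) * x := by
    intro x
    rw [h1 x, h0 x]
    ring
  -- An affine function of nonzero slope has a zero.
  have key : ∀ m n : ZMod 3, n ≠ 0 → m + n * 1 ≠ 0 → m + n * 2 ≠ 0 → m = 0 := by decide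
  have hconst : (f 1 1 - f 0 1) - (f 1 0 - f 0 0) = 0 := by
    by_contra hn
    exact (hy 0).1 (key _ _ hn (slope 1 ▸ (hy 1).1) (slope 2 ▸ (hy 2).1))
  refine ⟨f 1 0 - f 0 0, f 0 1 - f 0 0, f 0 0, ha, (hy 0).1, fun x y => ?_⟩
  rw [(hy x).2 y, slope x, hconst, h0 x]
  ring

/-- There is no rigid quasigroup of order 3: every quasigroup on a
three-element set admits a non-identity automorphism. -/
theorem order_three_not_rigid {Q : Type*} [Fintype Q] [Mul Q]
    (hcard : Fintype.card Q = 3)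
    (hL : ∀ a : Q, Function.Bijective (fun x : Q => a * x))
    (hR : ∀ a : Q, Function.Bijective (fun x : Q => x * a)) :
    ∃ α : Equiv.Perm Q, (∀ x y : Q, α (x * y) = α x * α y) ∧ α ≠ 1 := by
  have e : Q ≃ ZMod 3 := Fintype.equivOfCardEq (by rw [hcard, ZMod.card])
  obtain ⟨a, b, c, ha, hb, hf⟩ :=
    zmod3_quasigroup_affine (fun x y => e (e.symm x * e.symm y))
      (fun x y z h => e.symm.injective ((hL _).1 (e.injective h)))
      (fun y x z h => e.symm.injective ((hR _).1 (e.injective h)))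
  have hmul : ∀ x y : Q, e (x * y) = a * e x + b * e y + c := by
    intro x y
    simpa using hf (e x) (e y)
  have key : ∀ a b c : ZMod 3, a ≠ 0 → b ≠ 0 → ∃ u v : ZMod 3,
      u * u = 1 ∧ (u - 1) * c = (a + b - 1) * v ∧ ∃ t, u * t + v ≠ t := by decide
  obtain ⟨u, v, hu, huv, t, ht⟩ := key a b c ha hb
  let σ : Equiv.Perm (ZMod 3) :=
    { toFun := fun t => u * t + v
      invFun := fun t => u * (t - v)
      left_inv := fun t => by linear_combination t * hu
      right_inv := fun t => by linear_combination (t - v) * hu }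
  have hσ : ∀ t, σ t = u * t + v := fun _ => rfl
  refine ⟨(e.trans σ).trans e.symm, fun x y => e.injective ?_, fun h => ht ?_⟩
  · simp only [Equiv.trans_apply, Equiv.apply_symm_apply, hmul, hσ]
    linear_combination huv
  · have h' := congrArg e (Equiv.congr_fun h (e.symm t))
    simpa [hσ] using h'
end

section
/- Let Q be a finite quasigroup with tracks φ_i and spins φ_{ij} = φ_i ∘ φ_j⁻¹, and let Q* be its dual quasigroup with tracks ψ_i and spins ψ_{ij} = ψ_i ∘ ψ_j⁻¹. Then for all i, j ∈ Q, the spin ψ_{ij} has the same cycle type as φ_{ij}. -/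
/-! Cancelling `φ i x` in `ψ i (φ i x) * φ i x = i = x * φ i x` shows that the dual track `ψ i` is
the inverse of `φ i`. Hence the dual spin is `(φ i)⁻¹ * φ j`, which is the conjugate by `(φ j)⁻¹` of
`φ j * (φ i)⁻¹ = (φ i * (φ j)⁻¹)⁻¹`; inversion and conjugation both preserve the cycle type. -/

/-- The spins `ψ i ∘ (ψ j)⁻¹` of the dual quasigroup (`x * y = y · x`,
with tracks `ψ i`) have the same cycle types as the corresponding spins
`φ i ∘ (φ j)⁻¹` of the original finite quasigroup. -/
theorem dual_spins_cycleType {Q : Type*} [Fintype Q] [DecidableEq Q] [Mul Q]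
    (hL : ∀ a : Q, Function.Bijective (fun x : Q => a * x))
    (hR : ∀ a : Q, Function.Bijective (fun x : Q => x * a))
    (φ ψ : Q → Equiv.Perm Q)
    (hφ : ∀ i x : Q, x * φ i x = i)
    (hψ : ∀ i x : Q, ψ i x * x = i) :
    ∀ i j : Q, (ψ i * (ψ j)⁻¹).cycleType = (φ i * (φ j)⁻¹).cycleType := by
  have hinv : ∀ i, ψ i = (φ i)⁻¹ := fun i =>
    eq_inv_of_mul_eq_one_left <| Equiv.ext fun x =>
      (hR (φ i x)).injective ((hψ i (φ i x)).trans (hφ i x).symm)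
  intro i j
  have hconj : ψ i * (ψ j)⁻¹ = (φ j)⁻¹ * (φ i * (φ j)⁻¹)⁻¹ * (φ j)⁻¹⁻¹ := by
    rw [hinv i, hinv j]
    group
  rw [hconj, Equiv.Perm.cycleType_conj, Equiv.Perm.cycleType_inv]
end

section
/- Let Q be a finite quasigroup with tracks φ_i and spins φ_{ij} = φ_i ∘ φ_j⁻¹. If (α, β, γ) is an autotopism of Q, i.e. γ(x · y) = α(x) · β(y) for all x, y, then φ_{γ(i)γ(j)} = β ∘ φ_{ij} ∘ β⁻¹ for all i, j ∈ Q. -/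
/-- If `(α, β, γ)` is an autotopism of a finite quasigroup `Q`,
then the spins `φ i ∘ (φ j)⁻¹` satisfy
`φ (γ i) ∘ (φ (γ j))⁻¹ = β ∘ (φ i ∘ (φ j)⁻¹) ∘ β⁻¹` for all `i, j`. -/
theorem spin_autotopism_conj {Q : Type*} [Fintype Q] [Mul Q]
    (hL : ∀ a : Q, Function.Bijective (fun x : Q => a * x))
    (hR : ∀ a : Q, Function.Bijective (fun x : Q => x * a))
    (φ : Q → Equiv.Perm Q)
    (hφ : ∀ i x : Q, x * φ i x = i)
    (α β γ : Equiv.Perm Q)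
    (hat : ∀ x y : Q, γ (x * y) = α x * β y) :
    ∀ i j : Q, φ (γ i) * (φ (γ j))⁻¹ = β * (φ i * (φ j)⁻¹) * β⁻¹ := by
  -- An autotopism transports tracks: both sides, evaluated at `α x`, solve `α x * y = γ i`.
  have track : ∀ i : Q, φ (γ i) = β * φ i * α⁻¹ := by
    intro i
    rw [eq_mul_inv_iff_mul_eq]
    ext x
    apply (hL (α x)).injective
    change α x * φ (γ i) (α x) = α x * β (φ i x)
    rw [hφ, ← hat, hφ]
  intro i j
  -- The factors `α⁻¹` and `α` cancel in the spin.
  rw [track i, track j]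
  group
end

section
/- Let Q be a finite quasigroup with spins φ_{ij} = φ_i ∘ φ_j⁻¹ and spectra Sp(Φ_i) defined as the multiset of cycle types of the spins φ_{ij} over all j ≠ i. If (α, β, γ) is an autotopism of Q, then Sp(Φ_i) = Sp(Φ_{γ(i)}) for every i ∈ Q. -/
/-! An autotopism transports tracks: `α x * β (φ i x) = γ (x * φ i x) = γ i` says that
`φ (γ i) = β ∘ φ i ∘ α⁻¹`. In a spin the factors `α` cancel, so `φ (γ i) ∘ (φ (γ j))⁻¹` is the
conjugate of `φ i ∘ (φ j)⁻¹` by `β` and has the same cycle type. Reindexing the multiset along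
the bijection `γ` of `{j | j ≠ i}` onto `{j | j ≠ γ i}` gives the equality of spectra. -/

/-- If `(α, β, γ)` is an autotopism of a finite quasigroup `Q`, then
the spectrum `Sp(Φ i)` — the multiset of cycle types of the spins `φ i ∘ (φ j)⁻¹`
over all `j ≠ i` — satisfies `Sp(Φ i) = Sp(Φ (γ i))` for every `i`. -/
theorem spectrum_autotopism_invariant {Q : Type*} [Fintype Q] [DecidableEq Q] [Mul Q]
    (hL : ∀ a : Q, Function.Bijective (fun x : Q => a * x))
    (hR : ∀ a : Q, Function.Bijective (fun x : Q => x * a))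
    (φ : Q → Equiv.Perm Q)
    (hφ : ∀ i x : Q, x * φ i x = i)
    (α β γ : Equiv.Perm Q)
    (hat : ∀ x y : Q, γ (x * y) = α x * β y) :
    ∀ i : Q,
      (Finset.univ.filter (fun j : Q => j ≠ i)).val.map
        (fun j => (φ i * (φ j)⁻¹).cycleType) =
      (Finset.univ.filter (fun j : Q => j ≠ γ i)).val.map
        (fun j => (φ (γ i) * (φ j)⁻¹).cycleType) := by
  intro i
  have track : ∀ k, φ (γ k) = β * φ k * α⁻¹ := by
    intro k
    ext y
    apply (hL y).1
    have h := hat (α⁻¹ y) (φ k (α⁻¹ y))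
    rw [hφ] at h
    simpa [hφ] using h
  have index : Finset.univ.filter (fun j : Q => j ≠ γ i) =
      (Finset.univ.filter (fun j : Q => j ≠ i)).map γ.toEmbedding := by
    ext j
    simp [Equiv.symm_apply_eq]
  rw [index, Finset.map_val, Multiset.map_map]
  refine Multiset.map_congr rfl fun j _ => ?_
  have spin : φ (γ i) * (φ (γ j))⁻¹ = β * (φ i * (φ j)⁻¹) * β⁻¹ := by
    rw [track, track]
    group
  change _ = (φ (γ i) * (φ (γ j))⁻¹).cycleType
  rw [spin, Equiv.Perm.cycleType_conj]
end

section
/- Let Q be a finite quasigroup and suppose the part Φ_i is special, i.e. Sp(Φ_i) ≠ Sp(Φ_k) for all k ≠ i. Then γ(i) = i for every autotopism (α, β, γ) of Q. -/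
/-!
An autotopism `(α, β, γ)` carries tracks to tracks: `φ (γ j) = β ∘ φ j ∘ α⁻¹`, because both sides
solve `α x * y = γ j` for `y`. Hence the spin of the pair `(γ i, γ j)` is the conjugate by `β` of
the spin of `(i, j)` and has the same cycle type. As `j` runs over `j ≠ i`, `γ j` runs over all
elements other than `γ i`, so the parts `Φ i` and `Φ (γ i)` have equal spectra, and a special part
must satisfy `γ i = i`.
-/

/-- If the part `Φ i` of a finite quasigroup is special, i.e. its
spectrum (the multiset of cycle types of the spins `φ i ∘ (φ j)⁻¹` over `j ≠ i`)
differs from the spectrum of `Φ k` for all `k ≠ i`, then `γ i = i` for every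
autotopism `(α, β, γ)`. -/
theorem special_part_fixed {Q : Type*} [Fintype Q] [DecidableEq Q] [Mul Q]
    (hL : ∀ a : Q, Function.Bijective (fun x : Q => a * x))
    (hR : ∀ a : Q, Function.Bijective (fun x : Q => x * a))
    (φ : Q → Equiv.Perm Q)
    (hφ : ∀ i x : Q, x * φ i x = i)
    (i : Q)
    (hspec : ∀ k : Q, k ≠ i →
      (Finset.univ.filter (fun j : Q => j ≠ i)).val.map
        (fun j => (φ i * (φ j)⁻¹).cycleType) ≠
      (Finset.univ.filter (fun j : Q => j ≠ k)).val.map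
        (fun j => (φ k * (φ j)⁻¹).cycleType))
    (α β γ : Equiv.Perm Q)
    (hat : ∀ x y : Q, γ (x * y) = α x * β y) :
    γ i = i := by
  by_contra hne
  have track : ∀ j, φ (γ j) = β * φ j * α⁻¹ := by
    intro j
    ext y
    obtain ⟨x, rfl⟩ := α.surjective y
    apply (hL (α x)).1
    simp [hφ, ← hat]
  have spin : ∀ j, (φ (γ i) * (φ (γ j))⁻¹).cycleType = (φ i * (φ j)⁻¹).cycleType := by
    intro j
    have h : φ (γ i) * (φ (γ j))⁻¹ = β * (φ i * (φ j)⁻¹) * β⁻¹ := by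
      rw [track, track]
      group
    rw [h, Equiv.Perm.cycleType_conj]
  have reindex : Finset.univ.filter (fun j : Q => j ≠ γ i) =
      (Finset.univ.filter (fun j : Q => j ≠ i)).map γ.toEmbedding := by
    ext j
    obtain ⟨j, rfl⟩ := γ.surjective j
    simp
  apply hspec (γ i) hne
  rw [reindex, Finset.map_val, Multiset.map_map]
  exact Multiset.map_congr rfl fun j _ => (spin j).symm
end
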